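/- Let h ∈ ℝ[x₁,…,xₙ] be a homogeneous polynomial hyperbolic with respect to e ∈ ℝⁿ and let ℓ be a linear form with ℓ(e) ≠ 0. Then for all sufficiently small ε > 0, the polynomial h̃(x) := h(x) + ε·ℓ(x)·(∂_e h)(x) is again hyperbolic with respect to e, and for every point a with h(a) = 0 and ℓ(a) ≠ 0, the multiplicity of h̃ at a is one less than the multiplicity of h at a. -/

import Mathlib

open MvPolynomial

/-- The univariate polynomial `t ↦ h(a + t·v)` obtained by restricting a multivariate
polynomial `h` to the line through `a` with direction `v`. -/
noncomputable def linePoly {n : ℕ} (h : MvPolynomial (Fin n) ℝ) (a v : Fin n → ℝ) :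
    Polynomial ℝ :=
  MvPolynomial.aeval (fun i => Polynomial.C (a i) + Polynomial.C (v i) * Polynomial.X) h

/-- A real univariate polynomial has only real roots. -/
def RealRooted (q : Polynomial ℝ) : Prop :=
  ∀ z : ℂ, Polynomial.aeval z q = 0 → z.im = 0

/-- A real univariate polynomial has only non-negative real roots. -/
def NonnegRealRooted (q : Polynomial ℝ) : Prop :=
  ∀ z : ℂ, Polynomial.aeval z q = 0 → z.im = 0 ∧ 0 ≤ z.re

/-- `h` is hyperbolic in direction `e`: `h(e) ≠ 0` and for all `a` the univariate
polynomial `t ↦ h(a - t·e)` has only real roots. -/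
def IsHyperbolic {n : ℕ} (h : MvPolynomial (Fin n) ℝ) (e : Fin n → ℝ) : Prop :=
  MvPolynomial.eval e h ≠ 0 ∧ ∀ a : Fin n → ℝ, RealRooted (linePoly h a (-e))

/-- The hyperbolicity cone `Λ_e(h)`. -/
def hypCone {n : ℕ} (h : MvPolynomial (Fin n) ℝ) (e : Fin n → ℝ) : Set (Fin n → ℝ) :=
  {a | NonnegRealRooted (linePoly h a (-e))}

/-- multiplicity (order of vanishing) of `h` at `a`: the smallest `m` such that the
degree-`m` homogeneous component of `h(x + a)` is non-zero. -/
noncomputable def multAt {n : ℕ} (h : MvPolynomial (Fin n) ℝ) (a : Fin n → ℝ) : ℕ :=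
  sInf {m | MvPolynomial.homogeneousComponent m
    (MvPolynomial.aeval (fun i => MvPolynomial.X i + MvPolynomial.C (a i)) h) ≠ 0}

/-- `p` is a real-zero polynomial with respect to `e`. -/
def IsRealZero {n : ℕ} (p : MvPolynomial (Fin n) ℝ) (e : Fin n → ℝ) : Prop :=
  MvPolynomial.eval e p ≠ 0 ∧ ∀ v : Fin n → ℝ, RealRooted (linePoly p e v)

/-- The rigidly convex set `S_e(p)` of a real-zero polynomial. -/
def rigidSet {n : ℕ} (p : MvPolynomial (Fin n) ℝ) (e : Fin n → ℝ) : Set (Fin n → ℝ) :=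
  {a | ∀ t : ℝ, 0 ≤ t → t < 1 → ¬ (linePoly p e (a - e)).IsRoot t}

/-- A polynomial is strictly quasi-concave at `a` if its Hessian at `a` is negative
definite on the orthogonal complement of its gradient at `a`. -/
def StrictQuasiConcaveAt {n : ℕ} (g : MvPolynomial (Fin n) ℝ) (a : Fin n → ℝ) : Prop :=
  ∀ v : Fin n → ℝ, v ≠ 0 →
    (∑ i, v i * MvPolynomial.eval a (MvPolynomial.pderiv i g)) = 0 →
    (∑ i, ∑ j, v i * v j *
      MvPolynomial.eval a (MvPolynomial.pderiv i (MvPolynomial.pderiv j g))) < 0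

/-- A spectrahedral shadow (cone version): a linear image of
`{a : a₁M₁ + ⋯ + aₘMₘ ⪰ 0}` for real symmetric matrices `Mᵢ`. -/
def IsSpectrahedralShadowCone {n : ℕ} (S : Set (Fin n → ℝ)) : Prop :=
  ∃ (m d : ℕ) (M : Fin m → Matrix (Fin d) (Fin d) ℝ)
    (L : (Fin m → ℝ) →ₗ[ℝ] (Fin n → ℝ)),
      (∀ i, (M i).IsSymm) ∧ S = L '' {a | (∑ i, a i • M i).PosSemidef}

/-- A spectrahedral shadow: a linear image of
`{b : M₀ + b₁M₁ + ⋯ + bₘMₘ ⪰ 0}` for real symmetric matrices `Mᵢ`. -/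
def IsSpectrahedralShadow {n : ℕ} (S : Set (Fin n → ℝ)) : Prop :=
  ∃ (m d : ℕ) (M₀ : Matrix (Fin d) (Fin d) ℝ) (M : Fin m → Matrix (Fin d) (Fin d) ℝ)
    (L : (Fin m → ℝ) →ₗ[ℝ] (Fin n → ℝ)),
      M₀.IsSymm ∧ (∀ i, (M i).IsSymm) ∧
      S = L '' {b | (M₀ + ∑ i, b i • M i).PosSemidef}

/-- A convex set is pointed if it contains no affine line. -/
def PointedSet {n : ℕ} (S : Set (Fin n → ℝ)) : Prop :=
  ¬ ∃ (a v : Fin n → ℝ), v ≠ 0 ∧ ∀ t : ℝ, a + t • v ∈ S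

/-- Directional derivative `∂_e h = Σᵢ eᵢ ∂h/∂xᵢ`. -/
noncomputable def dirDeriv {n : ℕ} (e : Fin n → ℝ) (h : MvPolynomial (Fin n) ℝ) :
    MvPolynomial (Fin n) ℝ :=
  ∑ i, e i • MvPolynomial.pderiv i h

/-!
On the line `t ↦ a + t • e` the perturbation becomes `q + (α + β t) q'` with `q` real-rooted. A
root `z` of it that is not real satisfies `∑ (α + β z) / (z - r) = -1`, the sum being over the roots
`r` of `q`. As `r` varies over the reals, the summands stay on a circle through `0`, and the
Cauchy–Schwarz inequality then forces `|β| deg q ≥ 1`.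

The multiplicity drops by one because `∂_e` does not kill the lowest homogeneous part of `h` at `a`.
Otherwise, let `m` be the multiplicity of `h` at `a` and compare values at nearby points `b` and at
`b + t • e`. Writing `D` for Laguerre's expression `(∂_e h)² - h ∂_e² h`, real-rootedness gives
`D ≥ 0` and `|h(b + t • e)| ≤ |h(b)| exp (t ∂_e h(b) / h(b) + t² D(b) / h(b)²)`. Approach `a` by `b`
on a generic line. There `D` vanishes to order at least `2 * m - 1`, hence to order `2 * m` since
its sign does not change. Both quotients thus stay bounded, so `h(a + t • e) = 0` for all `t`, which
is absurd.
-/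

open scoped Topology

section RealRooted

variable {q : Polynomial ℝ}

lemma RealRooted.ne_zero (hq : RealRooted q) : q ≠ 0 := by
  rintro rfl
  simpa using hq Complex.I (by simp)

lemma RealRooted.splits (hq : RealRooted q) : q.Splits := by
  refine .of_splits_map (algebraMap ℝ ℂ) (IsAlgClosed.splits _) fun z hz ↦ ?_
  have hz : Polynomial.aeval z q = 0 := by
    rw [← Polynomial.eval_map_algebraMap]
    exact (Polynomial.mem_roots'.1 hz).2
  exact ⟨z.re, Complex.ext rfl (hq z hz).symm⟩

lemma aeval_derivative_div_aeval_of_splits {F K : Type*} [Field F] [Field K] [Algebra F K]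
    {q : Polynomial F} (hq : q.Splits) {z : K} (hz : Polynomial.aeval z q ≠ 0) :
    Polynomial.aeval z q.derivative / Polynomial.aeval z q =
      (q.roots.map fun r ↦ 1 / (z - algebraMap F K r)).sum := by
  rw [← Polynomial.eval_map_algebraMap] at hz
  have hlog := (hq.map (algebraMap F K)).eval_derivative_div_eval_of_ne_zero hz
  rwa [Polynomial.derivative_map, Polynomial.eval_map_algebraMap, Polynomial.eval_map_algebraMap,
    hq.roots_map, Multiset.map_map] at hlog

lemma one_le_neg_mul_card_of_sum_div_eq_neg_one {ι : Type*} [Fintype ι] (r : ι → ℝ) {α β : ℝ}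
    {z : ℂ} (hz : z.im ≠ 0) (hsum : ∑ i, (α + β * z) / (z - r i) = -1) :
    1 ≤ -β * Fintype.card ι := by
  set w : ι → ℂ := fun i ↦ (α + β * z) / (z - r i)
  have hre : ∑ i, (w i).re = -1 := by simpa using congrArg Complex.re hsum
  have him : ∑ i, (w i).im = 0 := by simpa using congrArg Complex.im hsum
  have hcircle (i : ι) : z.im * ((w i).re ^ 2 + (w i).im ^ 2) =
      β * z.im * (w i).re - (α + β * z.re) * (w i).im := by
    have hzr : z - r i ≠ 0 := fun h ↦ hz (by simpa using congrArg Complex.im h)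
    have hmul : w i * (z - r i) = α + β * z := div_mul_cancel₀ _ hzr
    have hmul_re := congrArg Complex.re hmul
    have hmul_im := congrArg Complex.im hmul
    simp only [Complex.mul_re, Complex.mul_im, Complex.add_re, Complex.add_im, Complex.sub_re,
      Complex.sub_im, Complex.ofReal_re, Complex.ofReal_im] at hmul_re hmul_im
    linear_combination (w i).re * hmul_im - (w i).im * hmul_re
  have hsq : ∑ i, ((w i).re ^ 2 + (w i).im ^ 2) = -β := by
    refine mul_left_cancel₀ hz ?_
    rw [Finset.mul_sum, Finset.sum_congr rfl fun i _ ↦ hcircle i, Finset.sum_sub_distrib,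
      ← Finset.mul_sum, ← Finset.mul_sum, hre, him]
    ring
  calc (1 : ℝ) = (∑ i, (w i).re) ^ 2 := by rw [hre]; norm_num
    _ ≤ Fintype.card ι * ∑ i, (w i).re ^ 2 := sq_sum_le_card_mul_sum_sq
    _ ≤ Fintype.card ι * ∑ i, ((w i).re ^ 2 + (w i).im ^ 2) := by
      gcongr with i
      exact le_add_of_nonneg_right (sq_nonneg _)
    _ = -β * Fintype.card ι := by rw [hsq, mul_comm]

theorem RealRooted.add_affine_mul_derivative (hq : RealRooted q) {α β : ℝ}
    (hβ : 0 < 1 + β * q.natDegree) :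
    RealRooted (q + (Polynomial.C α + Polynomial.C β * Polynomial.X) * q.derivative) := by
  intro z hz
  by_contra him
  have hqz : Polynomial.aeval z q ≠ 0 := fun h ↦ him (hq z h)
  have hlog : (α + β * z) * (Polynomial.aeval z q.derivative / Polynomial.aeval z q) = -1 := by
    simp only [map_add, map_mul, Polynomial.aeval_C, Polynomial.aeval_X,
      Complex.coe_algebraMap] at hz
    field_simp
    linear_combination hz
  have hsum : ∑ r : q.roots, (α + β * z) / (z - (r : ℝ)) = -1 := by
    rw [aeval_derivative_div_aeval_of_splits hq.splits hqz, ← Multiset.map_univ] at hlog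
    change (α + β * z) * ∑ r : q.roots, 1 / (z - (r : ℝ)) = -1 at hlog
    simpa only [Finset.mul_sum, mul_one_div] using hlog
  have hcard := one_le_neg_mul_card_of_sum_div_eq_neg_one _ him hsum
  rw [Multiset.card_coe, ← hq.splits.natDegree_eq_card_roots] at hcard
  linarith

/-- Laguerre's differential expression `q'² - q q''`, that is, `-q²` times the second logarithmic
derivative of `q`. -/
noncomputable def laguerre {R : Type*} [CommRing R] (q : Polynomial R) : Polynomial R :=
  q.derivative ^ 2 - q * q.derivative.derivative

lemma laguerre_mul {R : Type*} [CommRing R] (p q : Polynomial R) :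
    laguerre (p * q) = p ^ 2 * laguerre q + q ^ 2 * laguerre p := by
  simp only [laguerre, Polynomial.derivative_mul, Polynomial.derivative_add]
  ring

lemma eval_laguerre_prod_X_sub_C {F : Type*} [Field F] (s : Multiset F) {x : F}
    (hx : ∀ r ∈ s, x - r ≠ 0) :
    (laguerre (s.map fun r ↦ Polynomial.X - Polynomial.C r).prod).eval x =
      (s.map fun r ↦ Polynomial.X - Polynomial.C r).prod.eval x ^ 2 *
        (s.map fun r ↦ (1 / (x - r)) ^ 2).sum := by
  induction s using Multiset.induction_on with
  | empty => simp [laguerre]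
  | cons r s ih =>
    have hxr : x - r ≠ 0 := hx r (Multiset.mem_cons_self r s)
    have hlin : laguerre (Polynomial.X - Polynomial.C r) = 1 := by simp [laguerre]
    simp only [Multiset.map_cons, Multiset.prod_cons, Multiset.sum_cons, laguerre_mul, hlin,
      Polynomial.eval_add, Polynomial.eval_mul, Polynomial.eval_pow, Polynomial.eval_sub,
      Polynomial.eval_X, Polynomial.eval_C, Polynomial.eval_one,
      ih fun r hr ↦ hx r (Multiset.mem_cons_of_mem hr)]
    field_simp
    ring

lemma eval_laguerre_of_splits {F : Type*} [Field F] {q : Polynomial F} (hq : q.Splits) {x : F}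
    (hx : q.eval x ≠ 0) :
    (laguerre q).eval x = q.eval x ^ 2 * (q.roots.map fun r ↦ (1 / (x - r)) ^ 2).sum := by
  have hroots : ∀ r ∈ q.roots, x - r ≠ 0 := by
    rintro r hr hxr
    exact hx (sub_eq_zero.1 hxr ▸ (Polynomial.mem_roots'.1 hr).2)
  have hC : laguerre (Polynomial.C q.leadingCoeff) = 0 := by simp [laguerre]
  conv_lhs => rw [hq.eq_prod_roots, laguerre_mul, hC, mul_zero, add_zero, Polynomial.eval_mul]
  conv_rhs => enter [1, 1, 2]; rw [hq.eq_prod_roots]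
  rw [eval_laguerre_prod_X_sub_C q.roots hroots, Polynomial.eval_mul, Polynomial.eval_pow,
    Polynomial.eval_C]
  ring

theorem RealRooted.eval_laguerre_nonneg (hq : RealRooted q) (x : ℝ) :
    0 ≤ (laguerre q).eval x := by
  by_cases hx : q.eval x = 0
  · simpa [laguerre, hx] using sq_nonneg (q.derivative.eval x)
  · rw [eval_laguerre_of_splits hq.splits hx]
    refine mul_nonneg (sq_nonneg _) (Multiset.sum_nonneg fun y hy ↦ ?_)
    obtain ⟨r, -, rfl⟩ := Multiset.mem_map.1 hy
    positivity

lemma abs_one_add_le_exp_add_sq (u : ℝ) : |1 + u| ≤ Real.exp (u + u ^ 2) := by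
  refine le_trans (abs_le.2 ⟨?_, ?_⟩) (Real.add_one_le_exp (u + u ^ 2))
  · nlinarith [sq_nonneg (u + 1)]
  · nlinarith [sq_nonneg u]

theorem RealRooted.abs_eval_add_le (hq : RealRooted q) {x : ℝ} (hx : q.eval x ≠ 0) (t : ℝ) :
    |q.eval (x + t)| ≤ |q.eval x| *
      Real.exp (t * (q.derivative.eval x / q.eval x) +
        t ^ 2 * ((laguerre q).eval x / q.eval x ^ 2)) := by
  have hfactor : ∀ r ∈ q.roots, |x + t - r| ≤
      |x - r| * Real.exp (t * (1 / (x - r)) + t ^ 2 * (1 / (x - r)) ^ 2) := by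
    intro r hr
    have hxr : x - r ≠ 0 := fun h ↦ hx (sub_eq_zero.1 h ▸ (Polynomial.mem_roots'.1 hr).2)
    have hsplit : x + t - r = (x - r) * (1 + t * (1 / (x - r))) := by field_simp; ring
    rw [hsplit, abs_mul, ← mul_pow]
    gcongr
    exact abs_one_add_le_exp_add_sq _
  have hprod : (q.roots.map fun r ↦ |x + t - r|).prod ≤ (q.roots.map fun r ↦ |x - r|).prod *
      Real.exp (t * (q.roots.map fun r ↦ 1 / (x - r)).sum +
        t ^ 2 * (q.roots.map fun r ↦ (1 / (x - r)) ^ 2).sum) := by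
    rw [← Multiset.sum_map_mul_left, ← Multiset.sum_map_mul_left, ← Multiset.sum_map_add,
      Real.exp_multiset_sum, Multiset.map_map, ← Multiset.prod_map_mul]
    exact Multiset.prod_map_le_prod_map₀ _ _ (fun r _ ↦ abs_nonneg _) hfactor
  have habs (y : ℝ) : |q.eval y| = |q.leadingCoeff| * (q.roots.map fun r ↦ |y - r|).prod := by
    have hmap := map_multiset_prod absHom (q.roots.map fun r ↦ y - r)
    rw [Multiset.map_map] at hmap
    rw [hq.splits.eval_eq_prod_roots, abs_mul]
    exact congrArg (|q.leadingCoeff| * ·) hmap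
  rw [hq.splits.eval_derivative_div_eval_of_ne_zero hx, eval_laguerre_of_splits hq.splits hx,
    mul_div_cancel_left₀ _ (pow_ne_zero 2 hx), habs, habs, mul_assoc]
  gcongr

end RealRooted

lemma even_rootMultiplicity_of_nonneg {q : Polynomial ℝ} (hq : ∀ s, 0 ≤ q.eval s) (x : ℝ) :
    Even (q.rootMultiplicity x) := by
  rcases eq_or_ne q 0 with rfl | hq0
  · simp
  by_contra hodd
  obtain ⟨m, hm⟩ := Nat.not_even_iff_odd.1 hodd
  obtain ⟨p, hp, hpx⟩ := q.exists_eq_pow_rootMultiplicity_mul_and_not_dvd hq0 x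
  rw [hm] at hp
  have hmin : IsLocalMin (fun s ↦ ((Polynomial.X - Polynomial.C x) * p).eval s) x := by
    refine Filter.Eventually.of_forall fun s ↦ ?_
    rcases eq_or_ne s x with rfl | hs
    · rfl
    have hsx : 0 < (s - x) ^ (2 * m) := (even_two_mul m).pow_pos (sub_ne_zero.2 hs)
    have hnonneg : 0 ≤ (s - x) ^ (2 * m) * ((s - x) * p.eval s) := by
      simpa [hp, pow_succ, mul_assoc] using hq s
    simpa using nonneg_of_mul_nonneg_right hnonneg hsx
  have hderiv := hmin.deriv_eq_zero
  rw [Polynomial.deriv] at hderiv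
  exact hpx (Polynomial.dvd_iff_isRoot.2 (by simpa [Polynomial.derivative_mul] using hderiv))

section LinePoly

variable {n : ℕ} {h : MvPolynomial (Fin n) ℝ} {a v e : Fin n → ℝ}

lemma aeval_linePoly {A : Type*} [CommRing A] [Algebra ℝ A] (h : MvPolynomial (Fin n) ℝ)
    (a v : Fin n → ℝ) (z : A) :
    Polynomial.aeval z (linePoly h a v) =
      aeval (fun i ↦ algebraMap ℝ A (a i) + algebraMap ℝ A (v i) * z) h := by
  rw [linePoly, comp_aeval_apply]
  simp

lemma eval_linePoly (h : MvPolynomial (Fin n) ℝ) (a v : Fin n → ℝ) (s : ℝ) :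
    (linePoly h a v).eval s = eval (a + s • v) h := by
  rw [← Polynomial.coe_aeval_eq_eval, aeval_linePoly, ← coe_aeval_eq_eval]
  simp [mul_comm, Pi.add_def, Pi.smul_def]

lemma natDegree_linePoly_le (h : MvPolynomial (Fin n) ℝ) (a v : Fin n → ℝ) :
    (linePoly h a v).natDegree ≤ h.totalDegree := by
  have hdeg := aeval_natDegree_le h le_rfl
    (fun i ↦ Polynomial.C (a i) + Polynomial.C (v i) * Polynomial.X) (n := 1)
    fun i ↦ by compute_degree
  rwa [mul_one] at hdeg

lemma linePoly_sum_C_mul_X (l a v : Fin n → ℝ) :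
    linePoly (∑ i, C (l i) * X i) a v =
      Polynomial.C (∑ i, l i * a i) + Polynomial.C (∑ i, l i * v i) * Polynomial.X := by
  simp only [linePoly, map_sum, map_mul, aeval_X, algHom_C, Polynomial.algebraMap_eq,
    Finset.sum_mul, mul_add, mul_assoc, Finset.sum_add_distrib]

lemma derivation_aeval {σ R A M : Type*} [Fintype σ] [CommSemiring R] [CommSemiring A]
    [Algebra R A] [AddCommMonoid M] [Module A M] [Module R M] (D : Derivation R A M) (f : σ → A)
    (p : MvPolynomial σ R) :
    D (aeval f p) = ∑ i, aeval f (pderiv i p) • D (f i) := by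
  classical
  induction p using MvPolynomial.induction_on with
  | C r => simp [algHom_C]
  | add p q hp hq => simp [hp, hq, add_smul, Finset.sum_add_distrib]
  | mul_X p i hp =>
    simp [Derivation.leibniz, hp, pderiv_X, Pi.single_apply, add_smul, Finset.sum_add_distrib,
      Finset.smul_sum, mul_smul, apply_ite (aeval f), ite_smul]

lemma derivative_linePoly (h : MvPolynomial (Fin n) ℝ) (a v : Fin n → ℝ) :
    (linePoly h a v).derivative = linePoly (dirDeriv v h) a v := by
  have hchain := derivation_aeval (Polynomial.derivative' (R := ℝ))
    (fun i ↦ Polynomial.C (a i) + Polynomial.C (v i) * Polynomial.X) h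
  simp only [linePoly, dirDeriv, map_sum, map_smul]
  refine hchain.trans (Finset.sum_congr rfl fun i _ ↦ ?_)
  have hlin : Polynomial.derivative' (Polynomial.C (a i) + Polynomial.C (v i) * Polynomial.X) =
      Polynomial.C (v i) := by simp
  rw [hlin, Polynomial.smul_eq_C_mul, smul_eq_mul, mul_comm]

lemma isHyperbolic_iff : IsHyperbolic h e ↔
    eval e h ≠ 0 ∧ ∀ a, RealRooted (linePoly h a e) := by
  refine and_congr_right fun _ ↦ forall_congr' fun a ↦ ?_
  have hneg (z : ℂ) : Polynomial.aeval (-z) (linePoly h a (-e)) =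
      Polynomial.aeval z (linePoly h a e) := by simp [aeval_linePoly]
  refine ⟨fun hr z hz ↦ ?_, fun hr z hz ↦ ?_⟩
  · simpa using hr (-z) (by rwa [hneg])
  · simpa using hr (-z) (by rwa [← hneg, neg_neg])

/-- The substitution `h(x) ↦ h(x + a)`, whose homogeneous components define the multiplicity
`multAt h a`. -/
noncomputable def recenter (a : Fin n → ℝ) :
    MvPolynomial (Fin n) ℝ →ₐ[ℝ] MvPolynomial (Fin n) ℝ :=
  aeval fun i ↦ X i + C (a i)

lemma recenter_neg_recenter (a : Fin n → ℝ) (h : MvPolynomial (Fin n) ℝ) :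
    recenter (-a) (recenter a h) = h := by
  rw [recenter, recenter, comp_aeval_apply]
  simp [algHom_C]

lemma recenter_ne_zero (hh : h ≠ 0) : recenter a h ≠ 0 := by
  intro h0
  exact hh (by rw [← recenter_neg_recenter a h, h0, map_zero])

lemma recenter_dirDeriv (a v : Fin n → ℝ) (h : MvPolynomial (Fin n) ℝ) :
    recenter a (dirDeriv v h) = dirDeriv v (recenter a h) := by
  simp only [dirDeriv, map_sum, map_smul, recenter]
  refine Finset.sum_congr rfl fun i _ ↦ ?_
  rw [derivation_aeval]
  simp [pderiv_X, Pi.single_apply]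

lemma homogeneousComponent_dirDeriv (k : ℕ) (v : Fin n → ℝ) (h : MvPolynomial (Fin n) ℝ) :
    homogeneousComponent k (dirDeriv v h) = dirDeriv v (homogeneousComponent (k + 1) h) := by
  simp only [dirDeriv, map_sum, map_smul]
  congr! 2 with i
  ext α
  simp [coeff_homogeneousComponent, coeff_pderiv]

lemma linePoly_recenter (a v : Fin n → ℝ) (h : MvPolynomial (Fin n) ℝ) :
    linePoly (recenter a h) 0 v = linePoly h a v := by
  rw [linePoly, recenter, comp_aeval_apply]
  simp [linePoly, algHom_C, add_comm]

lemma coeff_linePoly_zero_left (h : MvPolynomial (Fin n) ℝ) (v : Fin n → ℝ) (k : ℕ) :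
    (linePoly h 0 v).coeff k = eval v (homogeneousComponent k h) := by
  induction h using MvPolynomial.induction_on' with
  | monomial α c =>
    have hpow : (α.prod fun i m ↦ (Polynomial.C (v i) * Polynomial.X) ^ m) =
        Polynomial.C (α.prod fun i m ↦ v i ^ m) * Polynomial.X ^ α.degree := by
      simp only [Finsupp.prod, mul_pow, Finset.prod_mul_distrib, Finset.prod_pow_eq_pow_sum,
        Finsupp.degree_apply, map_prod, map_pow]
    rw [homogeneousComponent_of_mem (isHomogeneous_monomial c rfl), linePoly, aeval_monomial]
    simp only [Pi.zero_apply, map_zero, zero_add, hpow, Polynomial.algebraMap_eq, ← mul_assoc,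
      ← Polynomial.C_mul, Polynomial.coeff_C_mul_X_pow, apply_ite (eval v), eval_monomial]
  | add p q hp hq =>
    rw [map_add, map_add, ← hp, ← hq, ← Polynomial.coeff_add]
    simp only [linePoly, map_add]

lemma coeff_linePoly (h : MvPolynomial (Fin n) ℝ) (a v : Fin n → ℝ) (k : ℕ) :
    (linePoly h a v).coeff k = eval v (homogeneousComponent k (recenter a h)) := by
  rw [← linePoly_recenter, coeff_linePoly_zero_left]

end LinePoly

/-- `h` vanishes to order at least `k` at `a`: its expansion around `a` starts in degree at
least `k`, so that `multAt h a` is the largest such `k` when `h ≠ 0`. -/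
def VanishesToOrder {n : ℕ} (h : MvPolynomial (Fin n) ℝ) (a : Fin n → ℝ) (k : ℕ) : Prop :=
  ∀ j < k, homogeneousComponent j (recenter a h) = 0

section Multiplicity

variable {n : ℕ} {g h : MvPolynomial (Fin n) ℝ} {a e : Fin n → ℝ} {j k : ℕ}

lemma vanishesToOrder_iff_X_pow_dvd :
    VanishesToOrder h a k ↔ ∀ v, Polynomial.X ^ k ∣ linePoly h a v := by
  simp only [Polynomial.X_pow_dvd_iff, coeff_linePoly]
  refine ⟨fun hv v j hj ↦ by rw [hv j hj, map_zero], fun hv j hj ↦ ?_⟩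
  exact MvPolynomial.funext fun v ↦ by rw [hv v j hj, map_zero]

lemma vanishesToOrder_one_iff : VanishesToOrder h a 1 ↔ eval a h = 0 := by
  simp [vanishesToOrder_iff_X_pow_dvd, Polynomial.X_dvd_iff, Polynomial.coeff_zero_eq_eval_zero,
    eval_linePoly]

lemma VanishesToOrder.mono (hh : VanishesToOrder h a k) (hjk : j ≤ k) : VanishesToOrder h a j :=
  fun i hi ↦ hh i (hi.trans_le hjk)

lemma VanishesToOrder.add (hg : VanishesToOrder g a k) (hh : VanishesToOrder h a k) :
    VanishesToOrder (g + h) a k :=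
  fun j hj ↦ by rw [map_add, map_add, hg j hj, hh j hj, add_zero]

lemma VanishesToOrder.sub (hg : VanishesToOrder g a k) (hh : VanishesToOrder h a k) :
    VanishesToOrder (g - h) a k :=
  fun j hj ↦ by rw [map_sub, map_sub, hg j hj, hh j hj, sub_zero]

lemma vanishesToOrder_mul_iff (hg : eval a g ≠ 0) :
    VanishesToOrder (g * h) a k ↔ VanishesToOrder h a k := by
  simp only [vanishesToOrder_iff_X_pow_dvd]
  refine forall_congr' fun v ↦ ?_
  have hX : ¬ Polynomial.X ∣ linePoly g a v := by
    rwa [Polynomial.X_dvd_iff, Polynomial.coeff_zero_eq_eval_zero, eval_linePoly, zero_smul,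
      add_zero]
  have hmul : linePoly (g * h) a v = linePoly g a v * linePoly h a v := map_mul _ g h
  rw [hmul]
  exact ⟨Polynomial.prime_X.pow_dvd_of_dvd_mul_left k hX, fun hd ↦ hd.mul_left _⟩

lemma VanishesToOrder.dirDeriv (hh : VanishesToOrder h a (k + 1)) (e : Fin n → ℝ) :
    VanishesToOrder (dirDeriv e h) a k := by
  intro j hj
  rw [recenter_dirDeriv, homogeneousComponent_dirDeriv, hh (j + 1) (Nat.succ_lt_succ hj)]
  simp [_root_.dirDeriv]

lemma exists_linePoly_eq_X_pow_mul (hk : VanishesToOrder h a k)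
    (hk' : ¬ VanishesToOrder h a (k + 1)) :
    ∃ v U, linePoly h a v = Polynomial.X ^ k * U ∧ U.eval 0 ≠ 0 := by
  rw [vanishesToOrder_iff_X_pow_dvd] at hk hk'
  obtain ⟨v, hv⟩ := not_forall.1 hk'
  obtain ⟨U, hU⟩ := hk v
  refine ⟨v, U, hU, fun hU0 ↦ hv ?_⟩
  rw [hU, pow_succ]
  exact mul_dvd_mul_left _ (Polynomial.X_dvd_iff.2 (by rwa [Polynomial.coeff_zero_eq_eval_zero]))

lemma vanishesToOrder_multAt (h : MvPolynomial (Fin n) ℝ) (a : Fin n → ℝ) :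
    VanishesToOrder h a (multAt h a) :=
  fun _ hj ↦ not_not.1 (Nat.notMem_of_lt_sInf hj)

lemma not_vanishesToOrder_multAt_add_one (hh : h ≠ 0) :
    ¬ VanishesToOrder h a (multAt h a + 1) := by
  have hne : {m | homogeneousComponent m (recenter a h) ≠ 0}.Nonempty := by
    by_contra! hempty
    refine recenter_ne_zero (a := a) hh ?_
    rw [← sum_homogeneousComponent (recenter a h)]
    exact Finset.sum_eq_zero fun m _ ↦ not_not.1 fun hm ↦ hempty.subset hm
  exact fun hv ↦ Nat.sInf_mem hne (hv _ (Nat.lt_succ_self _))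

lemma multAt_eq_of_vanishesToOrder (hk : VanishesToOrder h a k)
    (hk' : ¬ VanishesToOrder h a (k + 1)) : multAt h a = k := by
  refine IsLeast.csInf_eq ⟨fun h0 ↦ hk' fun j hj ↦ ?_, fun j hj ↦ ?_⟩
  · rcases Nat.lt_succ_iff_lt_or_eq.1 hj with hjk | rfl
    exacts [hk j hjk, h0]
  · exact not_lt.1 fun hjk ↦ hj (hk j hjk)

end Multiplicity

section Laguerre

variable {n : ℕ} {g h : MvPolynomial (Fin n) ℝ} {a b e v : Fin n → ℝ} {k m : ℕ}

/-- Laguerre's expression in several variables: its restriction to any line in direction `e` is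
`laguerre` of the restriction of `h`. -/
noncomputable def dirLaguerre (e : Fin n → ℝ) (h : MvPolynomial (Fin n) ℝ) :
    MvPolynomial (Fin n) ℝ :=
  dirDeriv e h ^ 2 - h * dirDeriv e (dirDeriv e h)

lemma linePoly_dirLaguerre (e : Fin n → ℝ) (h : MvPolynomial (Fin n) ℝ) (a v : Fin n → ℝ) :
    linePoly (dirLaguerre e h) a v = linePoly (dirDeriv e h) a v ^ 2 -
      linePoly h a v * linePoly (dirDeriv e (dirDeriv e h)) a v := by
  simp only [dirLaguerre, linePoly, map_sub, map_mul, map_pow]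

lemma laguerre_linePoly (h : MvPolynomial (Fin n) ℝ) (b e : Fin n → ℝ) :
    laguerre (linePoly h b e) = linePoly (dirLaguerre e h) b e := by
  rw [laguerre, derivative_linePoly, derivative_linePoly, linePoly_dirLaguerre]

lemma eval_dirLaguerre_nonneg (hb : RealRooted (linePoly h b e)) :
    0 ≤ eval b (dirLaguerre e h) := by
  simpa [laguerre_linePoly, eval_linePoly] using hb.eval_laguerre_nonneg 0

lemma abs_eval_add_smul_le (hb : RealRooted (linePoly h b e)) (h0 : eval b h ≠ 0) (t : ℝ) :
    |eval (b + t • e) h| ≤ |eval b h| *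
      Real.exp (t * (eval b (dirDeriv e h) / eval b h) +
        t ^ 2 * (eval b (dirLaguerre e h) / eval b h ^ 2)) := by
  simpa [laguerre_linePoly, derivative_linePoly, eval_linePoly] using
    hb.abs_eval_add_le (x := 0) (by simpa [eval_linePoly] using h0) t

lemma X_pow_dvd_linePoly_dirLaguerre (hreal : ∀ b, RealRooted (linePoly h b e))
    (hdvd : Polynomial.X ^ (2 * k + 1) ∣ linePoly (dirLaguerre e h) a v) :
    Polynomial.X ^ (2 * (k + 1)) ∣ linePoly (dirLaguerre e h) a v := by
  rcases eq_or_ne (linePoly (dirLaguerre e h) a v) 0 with h0 | h0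
  · rw [h0]
    exact dvd_zero _
  have heven : Even ((linePoly (dirLaguerre e h) a v).rootMultiplicity 0) :=
    even_rootMultiplicity_of_nonneg
      (fun s ↦ by rw [eval_linePoly]; exact eval_dirLaguerre_nonneg (hreal _)) 0
  have hX : (Polynomial.X : Polynomial ℝ) = Polynomial.X - Polynomial.C 0 := by simp
  rw [hX, ← Polynomial.le_rootMultiplicity_iff h0] at hdvd ⊢
  obtain ⟨r, hr⟩ := heven
  lia

lemma eval_add_smul_eq_zero_of_X_pow_dvd (hreal : ∀ b, RealRooted (linePoly h b e)) (hm : m ≠ 0)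
    {U : Polynomial ℝ} (hU : linePoly h a v = Polynomial.X ^ m * U) (hU0 : U.eval 0 ≠ 0)
    (hderiv : Polynomial.X ^ m ∣ linePoly (dirDeriv e h) a v)
    (hlaguerre : Polynomial.X ^ (2 * m) ∣ linePoly (dirLaguerre e h) a v) (t : ℝ) :
    eval (a + t • e) h = 0 := by
  obtain ⟨W, hW⟩ := hderiv
  obtain ⟨Z, hZ⟩ := hlaguerre
  have heval {g : MvPolynomial (Fin n) ℝ} {r : ℕ} {Q : Polynomial ℝ}
      (hQ : linePoly g a v = Polynomial.X ^ r * Q) (s : ℝ) :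
      eval (a + s • v) g = s ^ r * Q.eval s := by
    rw [← eval_linePoly, hQ, Polynomial.eval_mul, Polynomial.eval_pow, Polynomial.eval_X]
  have hUs : ∀ᶠ s in 𝓝[≠] (0 : ℝ), U.eval s ≠ 0 :=
    (U.continuous.continuousAt.eventually_ne hU0).filter_mono nhdsWithin_le_nhds
  have hbound : ∀ᶠ s in 𝓝[≠] (0 : ℝ), |(linePoly h (a + t • e) v).eval s| ≤
      |s ^ m * U.eval s| *
        Real.exp (t * (W.eval s / U.eval s) + t ^ 2 * (Z.eval s / U.eval s ^ 2)) := by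
    filter_upwards [hUs, self_mem_nhdsWithin] with s hs (hs0 : s ≠ 0)
    have hne : eval (a + s • v) h ≠ 0 := by
      rw [heval hU]
      exact mul_ne_zero (pow_ne_zero m hs0) hs
    have hle := abs_eval_add_smul_le (hreal _) hne t
    rwa [heval hU, heval hW, heval hZ, mul_div_mul_left _ _ (pow_ne_zero m hs0), mul_pow,
      ← pow_mul, mul_comm m 2, mul_div_mul_left _ _ (pow_ne_zero (2 * m) hs0),
      add_right_comm, ← eval_linePoly] at hle
  have hcont : ContinuousAt (fun s ↦ |s ^ m * U.eval s| *
      Real.exp (t * (W.eval s / U.eval s) + t ^ 2 * (Z.eval s / U.eval s ^ 2))) 0 := by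
    fun_prop (disch := simpa)
  have hlim := le_of_tendsto_of_tendsto
    ((linePoly h (a + t • e) v).continuous.abs.continuousAt.mono_left nhdsWithin_le_nhds)
    (hcont.mono_left nhdsWithin_le_nhds) hbound
  simpa [eval_linePoly, hm] using hlim

theorem not_vanishesToOrder_dirDeriv (hreal : ∀ b, RealRooted (linePoly h b e))
    (hk : VanishesToOrder h a (k + 1)) (hk' : ¬ VanishesToOrder h a (k + 2)) :
    ¬ VanishesToOrder (dirDeriv e h) a (k + 1) := by
  intro hderiv
  obtain ⟨v, U, hU, hU0⟩ := exists_linePoly_eq_X_pow_mul hk hk'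
  have hW := vanishesToOrder_iff_X_pow_dvd.1 hderiv v
  have hY := vanishesToOrder_iff_X_pow_dvd.1 (hderiv.dirDeriv e) v
  have hlaguerre : Polynomial.X ^ (2 * k + 1) ∣ linePoly (dirLaguerre e h) a v := by
    rw [linePoly_dirLaguerre]
    refine dvd_sub ?_ ?_
    · calc (Polynomial.X : Polynomial ℝ) ^ (2 * k + 1)
        _ ∣ (Polynomial.X ^ (k + 1)) ^ 2 := by
          rw [← pow_mul]
          exact pow_dvd_pow _ (by lia)
        _ ∣ linePoly (dirDeriv e h) a v ^ 2 := pow_dvd_pow_of_dvd hW 2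
    · rw [two_mul, add_right_comm, pow_add]
      exact mul_dvd_mul (hU ▸ dvd_mul_right _ _) hY
  have hzero := eval_add_smul_eq_zero_of_X_pow_dvd hreal k.succ_ne_zero hU hU0 hW
    (X_pow_dvd_linePoly_dirLaguerre hreal hlaguerre)
  refine (hreal a).ne_zero (Polynomial.funext fun t ↦ ?_)
  rw [eval_linePoly, hzero, Polynomial.eval_zero]

theorem multAt_add_mul_dirDeriv (hh : IsHyperbolic h e) (ha : eval a h = 0)
    (hg : eval a g ≠ 0) : multAt (h + g * dirDeriv e h) a = multAt h a - 1 := by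
  have hreal := (isHyperbolic_iff.1 hh).2
  have h0 : h ≠ 0 := by
    rintro rfl
    exact hh.1 (map_zero _)
  have hk := vanishesToOrder_multAt h a
  have hk' := not_vanishesToOrder_multAt_add_one (a := a) h0
  obtain ⟨k, hmult⟩ : ∃ k, multAt h a = k + 1 := by
    refine Nat.exists_eq_succ_of_ne_zero fun hzero ↦ hk' ?_
    rwa [hzero, zero_add, vanishesToOrder_one_iff]
  rw [hmult] at hk hk'
  rw [hmult, Nat.add_sub_cancel]
  refine multAt_eq_of_vanishesToOrder
    ((hk.mono k.le_succ).add ((vanishesToOrder_mul_iff hg).2 (hk.dirDeriv e))) fun hsum ↦ ?_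
  have hderiv : VanishesToOrder (g * dirDeriv e h) a (k + 1) := by
    simpa only [add_sub_cancel_left] using hsum.sub hk
  exact not_vanishesToOrder_dirDeriv hreal hk hk' ((vanishesToOrder_mul_iff hg).1 hderiv)

end Laguerre

theorem IsHyperbolic.eventually_add_smul_mul_dirDeriv {n : ℕ} {h : MvPolynomial (Fin n) ℝ}
    {e : Fin n → ℝ} (hh : IsHyperbolic h e) (l : Fin n → ℝ) :
    ∀ᶠ ε : ℝ in 𝓝 0, IsHyperbolic (h + ε • ((∑ i, C (l i) * X i) * dirDeriv e h)) e := by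
  rw [isHyperbolic_iff] at hh
  set L := ∑ i, l i * e i
  have heval : ∀ᶠ ε : ℝ in 𝓝 0, eval e h + ε * (L * eval e (dirDeriv e h)) ≠ 0 := by
    refine ContinuousAt.eventually_ne (by fun_prop) ?_
    simpa using hh.1
  have hdeg : ∀ᶠ ε : ℝ in 𝓝 0, |ε * L| * h.totalDegree < 1 := by
    refine ContinuousAt.eventually_lt (by fun_prop) continuousAt_const ?_
    simp
  filter_upwards [heval, hdeg] with ε hε hεdeg
  refine isHyperbolic_iff.2 ⟨by simpa [smul_eval] using hε, fun a ↦ ?_⟩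
  have hnat : |ε * L| * (linePoly h a e).natDegree < 1 := by
    refine lt_of_le_of_lt ?_ hεdeg
    gcongr
    exact natDegree_linePoly_le h a e
  have hβ : 0 < 1 + ε * L * (linePoly h a e).natDegree := by
    nlinarith [neg_abs_le (ε * L), (Nat.cast_nonneg _ : (0 : ℝ) ≤ (linePoly h a e).natDegree)]
  have hline : linePoly (h + ε • ((∑ i, C (l i) * X i) * dirDeriv e h)) a e =
      linePoly h a e + (Polynomial.C (ε * ∑ i, l i * a i) + Polynomial.C (ε * L) * Polynomial.X) *
        (linePoly h a e).derivative := by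
    have hlin := linePoly_sum_C_mul_X l a e
    rw [derivative_linePoly, Polynomial.C_mul, Polynomial.C_mul, mul_assoc, ← mul_add, mul_assoc]
    simp only [linePoly, map_add, map_smul, map_mul, Polynomial.smul_eq_C_mul] at hlin ⊢
    rw [hlin]
  rw [hline]
  exact (hh.2 a).add_affine_mul_derivative hβ

theorem nuij_perturbation_general {n : ℕ} (h : MvPolynomial (Fin n) ℝ) (e : Fin n → ℝ)
    (hhyp : IsHyperbolic h e) (l : Fin n → ℝ) :
    ∃ ε₀ > (0 : ℝ), ∀ ε : ℝ, 0 < ε → ε ≤ ε₀ →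
      IsHyperbolic (h + ε • ((∑ i, C (l i) * X i) * dirDeriv e h)) e ∧
      ∀ a : Fin n → ℝ, eval a h = 0 → (∑ i, l i * a i) ≠ 0 →
        multAt (h + ε • ((∑ i, C (l i) * X i) * dirDeriv e h)) a = multAt h a - 1 := by
  have hev := (hhyp.eventually_add_smul_mul_dirDeriv l).filter_mono
    (nhdsWithin_le_nhds (s := Set.Ioi 0))
  obtain ⟨ε₀, hε₀, hsub⟩ := mem_nhdsGT_iff_exists_Ioc_subset.1 hev
  refine ⟨ε₀, hε₀, fun ε hε hεε₀ ↦ ⟨hsub ⟨hε, hεε₀⟩, fun a ha hla ↦ ?_⟩⟩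
  rw [← smul_mul_assoc]
  refine multAt_add_mul_dirDeriv hhyp ha ?_
  simpa [smul_eval] using And.intro hε.ne' hla

/-- **Nuij's perturbation.** If `h` is homogeneous hyperbolic with respect
to `e` and `ℓ` is a linear form with `ℓ(e) ≠ 0`, then for all sufficiently small `ε > 0`
the polynomial `h̃ = h + ε·ℓ·∂_e h` is hyperbolic with respect to `e`, and at every point
`a` with `h(a) = 0` and `ℓ(a) ≠ 0` the multiplicity of `h̃` is one less than that of
`h`. -/
theorem nuij_perturbation
    {n d : ℕ} (h : MvPolynomial (Fin n) ℝ) (e : Fin n → ℝ)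
    (hhom : h.IsHomogeneous d) (hhyp : IsHyperbolic h e)
    (l : Fin n → ℝ) (hle : ∑ i, l i * e i ≠ 0) :
    ∃ ε₀ > (0 : ℝ), ∀ ε : ℝ, 0 < ε → ε ≤ ε₀ →
      IsHyperbolic
        (h + ε • ((∑ i, MvPolynomial.C (l i) * MvPolynomial.X i) * dirDeriv e h)) e ∧
      ∀ a : Fin n → ℝ, MvPolynomial.eval a h = 0 → (∑ i, l i * a i) ≠ 0 →
        multAt (h + ε • ((∑ i, MvPolynomial.C (l i) * MvPolynomial.X i) * dirDeriv e h)) a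
          = multAt h a - 1 :=
  nuij_perturbation_general h e hhyp l
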